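/- arXiv:2512.03504 — 3 statements merged into one kernel-verified Lean document; each statement's English description precedes it below -/
import Mathlib

section
/- Let r_e, z_e, α : ℝ → ℝ be differentiable functions and define the exiting ray family F : ℝ³ → ℝ³ by F(h, φ, t) = (R(h,t)·cos φ, R(h,t)·sin φ, Z(h,t)), where R(h,t) = r_e(h) − t·sin(α(h)) and Z(h,t) = z_e(h) + t·cos(α(h)). Then the determinant of the Jacobian matrix of F with respect to (h, φ, t) (columns ∂F/∂h, ∂F/∂φ, ∂F/∂t in that order) factors as det(J_F)(h,φ,t) = R(h,t) · ( (∂R/∂h)(h,t)·cos(α(h)) + (∂Z/∂h)(h,t)·sin(α(h)) ) = R(h,t) · ( r_e'(h)·cos(α(h)) + z_e'(h)·sin(α(h)) − t·α'(h) ), for all (h, φ, t). -/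
open Matrix Real

/-- Radial coordinate of the exiting ray: `R(h,t) = r_e(h) − t sin α(h)`. -/
noncomputable def rayR (r_e α : ℝ → ℝ) (h t : ℝ) : ℝ := r_e h - t * Real.sin (α h)

/-- Axial coordinate of the exiting ray: `Z(h,t) = z_e(h) + t cos α(h)`. -/
noncomputable def rayZ (z_e α : ℝ → ℝ) (h t : ℝ) : ℝ := z_e h + t * Real.cos (α h)

/-- The exiting ray family `F(h,φ,t) = (R cos φ, R sin φ, Z)`. -/
noncomputable def rayF (r_e z_e α : ℝ → ℝ) (h φ t : ℝ) : Fin 3 → ℝ :=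
  ![rayR r_e α h t * Real.cos φ, rayR r_e α h t * Real.sin φ, rayZ z_e α h t]

/-- Jacobian determinant of `F` with respect to `(h, φ, t)`
(columns `∂F/∂h, ∂F/∂φ, ∂F/∂t`). -/
noncomputable def rayJdet (r_e z_e α : ℝ → ℝ) (h φ t : ℝ) : ℝ :=
  (Matrix.of fun i j : Fin 3 =>
    ![deriv (fun x => rayF r_e z_e α x φ t) h,
      deriv (fun x => rayF r_e z_e α h x t) φ,
      deriv (fun x => rayF r_e z_e α h φ x) t] j i).det

/-- the Jacobian determinant of the exiting ray family factors as
`det J_F = R · (∂R/∂h · cos α + ∂Z/∂h · sin α)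
        = R · (r_e' cos α + z_e' sin α − t α')`. -/
theorem ray_jacobian_factorization (r_e z_e α : ℝ → ℝ)
    (hr : Differentiable ℝ r_e) (hz : Differentiable ℝ z_e) (hα : Differentiable ℝ α) :
    ∀ h φ t : ℝ,
      rayJdet r_e z_e α h φ t =
        rayR r_e α h t *
          (deriv (fun x => rayR r_e α x t) h * Real.cos (α h) +
            deriv (fun x => rayZ z_e α x t) h * Real.sin (α h)) ∧
      rayJdet r_e z_e α h φ t =
        rayR r_e α h t *
          (deriv r_e h * Real.cos (α h) + deriv z_e h * Real.sin (α h) -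
            t * deriv α h) := by
  intro h φ t
  have hR : HasDerivAt (fun x => rayR r_e α x t)
      (deriv r_e h - t * (Real.cos (α h) * deriv α h)) h :=
    (hr h).hasDerivAt.sub (((hα h).hasDerivAt.sin).const_mul t)
  have hZ : HasDerivAt (fun x => rayZ z_e α x t)
      (deriv z_e h + t * (-Real.sin (α h) * deriv α h)) h :=
    (hz h).hasDerivAt.add (((hα h).hasDerivAt.cos).const_mul t)
  have hRt : HasDerivAt (fun x => rayR r_e α h x) (-Real.sin (α h)) t := by
    have := ((hasDerivAt_id t).mul_const (Real.sin (α h))).const_sub (r_e h)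
    simpa [rayR] using this
  have hZt : HasDerivAt (fun x => rayZ z_e α h x) (Real.cos (α h)) t := by
    have := ((hasDerivAt_id t).mul_const (Real.cos (α h))).const_add (z_e h)
    simpa [rayZ] using this
  have d1 : HasDerivAt (fun x => rayF r_e z_e α x φ t)
      ![(deriv r_e h - t * (Real.cos (α h) * deriv α h)) * Real.cos φ,
        (deriv r_e h - t * (Real.cos (α h) * deriv α h)) * Real.sin φ,
        deriv z_e h + t * (-Real.sin (α h) * deriv α h)] h := by
    rw [hasDerivAt_pi]
    intro i
    fin_cases i
    · exact hR.mul_const _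
    · exact hR.mul_const _
    · exact hZ
  have d2 : HasDerivAt (fun x => rayF r_e z_e α h x t)
      ![rayR r_e α h t * (-Real.sin φ), rayR r_e α h t * Real.cos φ, 0] φ := by
    rw [hasDerivAt_pi]
    intro i
    fin_cases i
    · exact (Real.hasDerivAt_cos φ).const_mul _
    · exact (Real.hasDerivAt_sin φ).const_mul _
    · exact hasDerivAt_const _ _
  have d3 : HasDerivAt (fun x => rayF r_e z_e α h φ x)
      ![-Real.sin (α h) * Real.cos φ, -Real.sin (α h) * Real.sin φ, Real.cos (α h)] t := by
    rw [hasDerivAt_pi]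
    intro i
    fin_cases i
    · exact hRt.mul_const _
    · exact hRt.mul_const _
    · exact hZt
  have hα1 := Real.sin_sq_add_cos_sq (α h)
  have hφ1 := Real.sin_sq_add_cos_sq φ
  have key : rayJdet r_e z_e α h φ t =
        rayR r_e α h t *
          (deriv (fun x => rayR r_e α x t) h * Real.cos (α h) +
            deriv (fun x => rayZ z_e α x t) h * Real.sin (α h)) := by
    unfold rayJdet
    rw [d1.deriv, d2.deriv, d3.deriv, hR.deriv, hZ.deriv, Matrix.det_fin_three]
    simp
    generalize deriv r_e h - t * (Real.cos (α h) * deriv α h) = A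
    generalize rayR r_e α h t = R
    generalize deriv z_e h + _ = B
    linear_combination (R * (A * Real.cos (α h) + B * Real.sin (α h))) * hφ1
  refine ⟨key, ?_⟩
  rw [key, hR.deriv, hZ.deriv]
  linear_combination (-rayR r_e α h t * t * deriv α h) * hα1
end

section
/- Let r_e, z_e, α : ℝ → ℝ be differentiable, and for h with α'(h) ≠ 0 set t_c(h) = ( r_e'(h) cos α(h) + z_e'(h) sin α(h) ) / α'(h), r_caustic(h) = r_e(h) − t_c(h)·sin α(h), and z_caustic(h) = z_e(h) + t_c(h)·cos α(h). Then for every φ, the exiting ray family F(h,φ,t) = ((r_e(h) − t sin α(h)) cos φ, (r_e(h) − t sin α(h)) sin φ, z_e(h) + t cos α(h)) satisfies: (i) F(h, φ, t_c(h)) = (r_caustic(h) cos φ, r_caustic(h) sin φ, z_caustic(h)); and (ii) the Jacobian determinant of F with respect to (h,φ,t) vanishes at (h, φ, t_c(h)). Hence the caustic surface of the lens is parameterized in cylindrical coordinates by (r, z) = (r_caustic(h), z_caustic(h)), φ ∈ [0, 2π). -/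
open Matrix Real

/-- the caustic surface of the lens is parameterized by
`(r_caustic(h), z_caustic(h))`: the exiting ray through `(h,φ)` at the critical
distance `t_c(h)` hits that point, and the Jacobian determinant vanishes there. -/
theorem lens_caustic_parameterization (r_e z_e α : ℝ → ℝ)
    (hr : Differentiable ℝ r_e) (hz : Differentiable ℝ z_e) (hα : Differentiable ℝ α)
    (h : ℝ) (hα' : deriv α h ≠ 0) :
    ∀ φ : ℝ,
      let tc : ℝ :=
        (deriv r_e h * Real.cos (α h) + deriv z_e h * Real.sin (α h)) / deriv α h
      let rc : ℝ := r_e h - tc * Real.sin (α h)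
      let zc : ℝ := z_e h + tc * Real.cos (α h)
      rayF r_e z_e α h φ tc = ![rc * Real.cos φ, rc * Real.sin φ, zc] ∧
      rayJdet r_e z_e α h φ tc = 0 := by
  intro φ tc rc zc
  refine ⟨rfl, ?_⟩
  have htc : tc * deriv α h =
      deriv r_e h * Real.cos (α h) + deriv z_e h * Real.sin (α h) :=
    div_mul_cancel₀ _ hα'
  clear_value tc
  have hR : HasDerivAt (fun x => rayR r_e α x tc)
      (deriv r_e h - tc * (Real.cos (α h) * deriv α h)) h :=
    (hr h).hasDerivAt.sub ((hα h).hasDerivAt.sin.const_mul tc)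
  have hZ : HasDerivAt (fun x => rayZ z_e α x tc)
      (deriv z_e h + tc * (-Real.sin (α h) * deriv α h)) h :=
    (hz h).hasDerivAt.add ((hα h).hasDerivAt.cos.const_mul tc)
  have hRt : HasDerivAt (fun x => rayR r_e α h x) (-(1 * Real.sin (α h))) tc :=
    ((hasDerivAt_id tc).mul_const (Real.sin (α h))).const_sub (r_e h)
  have hZt : HasDerivAt (fun x => rayZ z_e α h x) (1 * Real.cos (α h)) tc :=
    ((hasDerivAt_id tc).mul_const (Real.cos (α h))).const_add (z_e h)
  have h1 : HasDerivAt (fun x => rayF r_e z_e α x φ tc)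
      ![(deriv r_e h - tc * (Real.cos (α h) * deriv α h)) * Real.cos φ,
        (deriv r_e h - tc * (Real.cos (α h) * deriv α h)) * Real.sin φ,
        deriv z_e h + tc * (-Real.sin (α h) * deriv α h)] h := by
    rw [hasDerivAt_pi]
    intro i
    fin_cases i
    · exact hR.mul_const _
    · exact hR.mul_const _
    · exact hZ
  have h2 : HasDerivAt (fun x => rayF r_e z_e α h x tc)
      ![rayR r_e α h tc * -Real.sin φ, rayR r_e α h tc * Real.cos φ, 0] φ := by
    rw [hasDerivAt_pi]
    intro i
    fin_cases i
    · exact (Real.hasDerivAt_cos φ).const_mul _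
    · exact (Real.hasDerivAt_sin φ).const_mul _
    · exact hasDerivAt_const _ _
  have h3 : HasDerivAt (fun x => rayF r_e z_e α h φ x)
      ![-(1 * Real.sin (α h)) * Real.cos φ, -(1 * Real.sin (α h)) * Real.sin φ,
        1 * Real.cos (α h)] tc := by
    rw [hasDerivAt_pi]
    intro i
    fin_cases i
    · exact hRt.mul_const _
    · exact hRt.mul_const _
    · exact hZt
  unfold rayJdet
  rw [h1.deriv, h2.deriv, h3.deriv, Matrix.det_fin_three]
  simp only [Matrix.of_apply, Matrix.cons_val]
  have e1 := Real.sin_sq_add_cos_sq (α h)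
  have e2 := Real.sin_sq_add_cos_sq φ
  generalize rayR r_e α h tc = R
  linear_combination (-R * (Real.sin φ ^ 2 + Real.cos φ ^ 2)) * htc
    - R * tc * deriv α h * (Real.sin φ ^ 2 + Real.cos φ ^ 2) * e1
end

section
/- Let r_e, z_e, α : ℝ → ℝ be differentiable, R(h,t) = r_e(h) − t·sin(α(h)), Z(h,t) = z_e(h) + t·cos(α(h)), and F(h,φ,t) = (R cos φ, R sin φ, Z). Then for every (h, φ, t), the Jacobian determinant of F vanishes, det(J_F)(h,φ,t) = 0, if and only if either R(h,t) = 0 (the sagittal caustic: the ray meets the optical axis) or r_e'(h)·cos(α(h)) + z_e'(h)·sin(α(h)) − t·α'(h) = 0 (the meridional caustic condition). -/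
open Matrix Real

/-- the Jacobian determinant of the exiting ray family vanishes iff
either `R(h,t) = 0` (sagittal caustic) or
`r_e' cos α + z_e' sin α − t α' = 0` (meridional caustic condition). -/
theorem caustic_dichotomy (r_e z_e α : ℝ → ℝ)
    (hr : Differentiable ℝ r_e) (hz : Differentiable ℝ z_e) (hα : Differentiable ℝ α) :
    ∀ h φ t : ℝ,
      rayJdet r_e z_e α h φ t = 0 ↔
        rayR r_e α h t = 0 ∨
          deriv r_e h * Real.cos (α h) + deriv z_e h * Real.sin (α h) -
            t * deriv α h = 0 := by
  intro h φ t
  have hR : HasDerivAt (fun x => rayR r_e α x t)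
      (deriv r_e h - t * (Real.cos (α h) * deriv α h)) h :=
    (hr h).hasDerivAt.sub (((hα h).hasDerivAt.sin).const_mul t)
  have hZ : HasDerivAt (fun x => rayZ z_e α x t)
      (deriv z_e h + t * (-Real.sin (α h) * deriv α h)) h :=
    (hz h).hasDerivAt.add (((hα h).hasDerivAt.cos).const_mul t)
  have hRt : HasDerivAt (fun x => rayR r_e α h x) (-(1 * Real.sin (α h))) t :=
    ((hasDerivAt_id t).mul_const (Real.sin (α h))).const_sub (r_e h)
  have hZt : HasDerivAt (fun x => rayZ z_e α h x) (1 * Real.cos (α h)) t :=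
    ((hasDerivAt_id t).mul_const (Real.cos (α h))).const_add (z_e h)
  have h1 : deriv (fun x => rayF r_e z_e α x φ t) h =
      ![(deriv r_e h - t * (Real.cos (α h) * deriv α h)) * Real.cos φ,
        (deriv r_e h - t * (Real.cos (α h) * deriv α h)) * Real.sin φ,
        deriv z_e h + t * (-Real.sin (α h) * deriv α h)] := by
    apply HasDerivAt.deriv
    rw [hasDerivAt_pi]
    intro i
    fin_cases i
    · exact hR.mul_const (Real.cos φ)
    · exact hR.mul_const (Real.sin φ)
    · exact hZ
  have h2 : deriv (fun x => rayF r_e z_e α h x t) φ =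
      ![rayR r_e α h t * -Real.sin φ, rayR r_e α h t * Real.cos φ, 0] := by
    apply HasDerivAt.deriv
    rw [hasDerivAt_pi]
    intro i
    fin_cases i
    · exact (Real.hasDerivAt_cos φ).const_mul (rayR r_e α h t)
    · exact (Real.hasDerivAt_sin φ).const_mul (rayR r_e α h t)
    · exact hasDerivAt_const φ (rayZ z_e α h t)
  have h3 : deriv (fun x => rayF r_e z_e α h φ x) t =
      ![-(1 * Real.sin (α h)) * Real.cos φ, -(1 * Real.sin (α h)) * Real.sin φ,
        1 * Real.cos (α h)] := by
    apply HasDerivAt.deriv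
    rw [hasDerivAt_pi]
    intro i
    fin_cases i
    · exact hRt.mul_const (Real.cos φ)
    · exact hRt.mul_const (Real.sin φ)
    · exact hZt
  have key : rayJdet r_e z_e α h φ t = rayR r_e α h t *
      (deriv r_e h * Real.cos (α h) + deriv z_e h * Real.sin (α h) - t * deriv α h) := by
    unfold rayJdet
    rw [h1, h2, h3, Matrix.det_fin_three]
    simp
    have e1 := Real.sin_sq_add_cos_sq φ
    have e2 := Real.sin_sq_add_cos_sq (α h)
    generalize rayR r_e α h t = R
    generalize deriv r_e h = a
    generalize deriv z_e h = b
    generalize deriv α h = c at *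
    generalize Real.sin (α h) = s at *
    generalize Real.cos (α h) = k at *
    generalize Real.sin φ = u at *
    generalize Real.cos φ = v at *
    linear_combination R * (a * k + b * s - t * c * (s ^ 2 + k ^ 2)) * e1 - R * t * c * e2
  rw [key, mul_eq_zero]
end
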